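/- Let N, d, C be natural numbers at least 2, let 1 ≤ k ≤ d − 1, and let σ, δ > 0 with σ < δ/2. If 2σ/δ ≤ (1/2)·√(k/(d·e))·N^{−2/k}, then every δ-separated dataset D of size N with C classes in ℝ^d is (σ, ε, k)-orthogonally preservable with ε = (1/2)·√(k/(d·e))·N^{−2/k}; that is, there exists an orthogonal projection P of ℝ^d onto a k-dimensional subspace such that ε·‖a − a'‖₂ ≤ ‖P(a − a')‖₂ for every (x,y), (x',y') ∈ D with y ≠ y' and every a ∈ B₂^d(x, σ), a' ∈ B₂^d(x', σ). -/

import Mathlib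

open scoped ENNReal BigOperators

noncomputable section

/-- A multilayer perceptron (feedforward ReLU network) with input dimension `m`
and output dimension `n`, given as a nonempty list of affine layers. -/
inductive MLP : ℕ → ℕ → Type
  | last : {m n : ℕ} → Matrix (Fin n) (Fin m) ℝ → (Fin n → ℝ) → MLP m n
  | cons : {m h n : ℕ} → Matrix (Fin h) (Fin m) ℝ → (Fin h → ℝ) → MLP h n → MLP m n

/-- Evaluation of an MLP: every affine layer except the last is followed by a
coordinatewise ReLU. -/
def MLP.eval : {m n : ℕ} → MLP m n → (Fin m → ℝ) → Fin n → ℝ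
  | _, _, .last W b, x => W.mulVec x + b
  | _, _, .cons W b rest, x => MLP.eval rest fun i => max ((W.mulVec x + b) i) 0

/-- Depth of an MLP: the number of affine layers. -/
def MLP.depth : {m n : ℕ} → MLP m n → ℕ
  | _, _, .last _ _ => 1
  | _, _, .cons _ _ rest => MLP.depth rest + 1

/-- Width of an MLP: the maximum of the hidden-layer dimensions. -/
def MLP.width : {m n : ℕ} → MLP m n → ℕ
  | _, _, .last _ _ => 0
  | _, _, @MLP.cons _ h _ _ _ rest => max h (MLP.width rest)

/-- The `l_p` (quasi-)norm on `ℝ^d`, for `p ∈ (0,∞]`. -/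
def lpNorm (p : ℝ≥0∞) {d : ℕ} (x : Fin d → ℝ) : ℝ :=
  if p = ⊤ then ⨆ i, |x i| else (∑ i, |x i| ^ p.toReal) ^ (1 / p.toReal)

/-- The `l_p` norm on `ℝ^d` with a real exponent `p`. -/
def lpNormR (p : ℝ) {d : ℕ} (x : Fin d → ℝ) : ℝ := (∑ i, |x i| ^ p) ^ (1 / p)

/-- `1/p`, with the convention `1/∞ = 0`. -/
def rinv (p : ℝ≥0∞) : ℝ := if p = ⊤ then 0 else 1 / p.toReal

/-- `c_p^+(d) = d^{[1/2 - 1/p]_+}`. -/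
def cplus (p : ℝ≥0∞) (d : ℕ) : ℝ := (d : ℝ) ^ max ((1 : ℝ) / 2 - rinv p) 0

/-- `c_p^-(d) = d^{[1/2 - 1/p]_-}`. -/
def cminus (p : ℝ≥0∞) (d : ℕ) : ℝ := (d : ℝ) ^ min ((1 : ℝ) / 2 - rinv p) 0

/-- A dataset is `(δ, q)`-separated if the minimal `l_q` distance between
differently labeled points equals `δ`. -/
def Separated {N d : ℕ} (q : ℝ≥0∞) (δ : ℝ) (X : Fin N → Fin d → ℝ) (Y : Fin N → ℕ) : Prop :=
  (∀ i j, Y i ≠ Y j → δ ≤ lpNorm q (X i - X j)) ∧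
    ∃ i j, Y i ≠ Y j ∧ lpNorm q (X i - X j) = δ

/-- `f` `(σ, p)`-robustly memorizes the dataset `(X, Y)`. -/
def RobustMem {N d : ℕ} (p : ℝ≥0∞) (σ : ℝ) (X : Fin N → Fin d → ℝ) (Y : Fin N → ℕ)
    (f : (Fin d → ℝ) → ℝ) : Prop :=
  ∀ i, ∀ x : Fin d → ℝ, lpNorm p (x - X i) ≤ σ → f x = (Y i : ℝ)

/-- A matrix `M` `(σ, k)`-preserves a dataset: Euclidean distances between points of
`σ`-neighborhoods (in `l₂`) of differently labeled data points do not decrease. -/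
def Preserves {N d m : ℕ} (σ : ℝ) (X : Fin N → Fin d → ℝ) (Y : Fin N → ℕ)
    (M : Matrix (Fin m) (Fin d) ℝ) : Prop :=
  ∀ i j, Y i ≠ Y j → ∀ a a' : Fin d → ℝ,
    lpNorm 2 (a - X i) ≤ σ → lpNorm 2 (a' - X j) ≤ σ →
      lpNorm 2 (a - a') ≤ lpNorm 2 (M.mulVec a - M.mulVec a')

/-- The `l₂ → l₂` (spectral) operator norm of a matrix. -/
def matOpNorm {m d : ℕ} (M : Matrix (Fin m) (Fin d) ℝ) : ℝ :=
  sSup {c | ∃ x : Fin d → ℝ, lpNorm 2 x ≤ 1 ∧ c = lpNorm 2 (M.mulVec x)}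

/-- Generalized binomial coefficient `C(s, m) = s(s-1)⋯(s-m+1)/m!`. -/
def gchoose (s : ℝ) (m : ℕ) : ℝ := (∏ i ∈ Finset.range m, (s - (i : ℝ))) / (m.factorial : ℝ)

/-!
A random `k`-dimensional subspace works. Fix `K₀` and rotate it by a Haar-random orthogonal map: the
probability that the projection shrinks a given nonzero vector below the factor `c` does not depend
on the vector, so it may be averaged over a standard Gaussian vector, where it is the Gaussian
measure of the cone `‖P₀ x‖ < c ‖x‖`. A Chernoff bound with the exact exponential moment of the
quadratic form `a ‖P₀ x‖² + b ‖x - P₀ x‖²` gives at most `r ^ k` for `c = r √(k / (d e))`. As fewer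
than `N²` differences of data points occur, `r = N ^ (-2 / k)` leaves room for all of them at once,
and moving each point by `σ` loses only a factor `2`.
-/

section

open MeasureTheory ProbabilityTheory Module Metric
open scoped RealInnerProductSpace

theorem sub_mul_norm_le_norm_map {E F : Type*} [NormedAddCommGroup E] [InnerProductSpace ℝ E]
    [SeminormedAddCommGroup F] [NormedSpace ℝ F] {T : E →L[ℝ] F} (hT : ‖T‖ ≤ 1) {u v : E} {α β : ℝ}
    (hβ : β < 1) (hu : α * ‖u‖ ≤ ‖T u‖) (huv : ‖u - v‖ ≤ β * ‖u‖) :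
    (α - β) * ‖v‖ ≤ ‖T v‖ := by
  rcases eq_or_ne u 0 with rfl | hu0
  · obtain rfl : v = 0 := by simpa using huv
    simp
  rcases le_or_gt α β with hαβ | hαβ
  · exact (mul_nonpos_of_nonpos_of_nonneg (sub_nonpos.2 hαβ) (norm_nonneg v)).trans (norm_nonneg _)
  -- The point of `ℝ ∙ v` closest to `u` is no longer than `u` and no further from `u` than `v`.
  obtain ⟨c, hc⟩ : ∃ c : ℝ, c • v = (ℝ ∙ v).starProjection u :=
    Submodule.mem_span_singleton.1 ((ℝ ∙ v).starProjection_apply_mem u)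
  have hcu : ‖u - c • v‖ ≤ β * ‖u‖ := by
    rw [hc, Submodule.starProjection_minimal]
    exact (ciInf_le ⟨0, Set.forall_mem_range.2 fun _ => norm_nonneg _⟩
      ⟨v, Submodule.mem_span_singleton_self v⟩).trans huv
  have hc0 : c ≠ 0 := by
    rintro rfl
    rw [zero_smul, sub_zero] at hcu
    nlinarith [norm_pos_iff.2 hu0]
  have hscaled : |c| * ((α - β) * ‖v‖) ≤ |c| * ‖T v‖ := calc
    |c| * ((α - β) * ‖v‖) = (α - β) * ‖c • v‖ := by rw [norm_smul, Real.norm_eq_abs]; ring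
    _ ≤ (α - β) * ‖u‖ := by
      gcongr
      exact hc ▸ (ℝ ∙ v).norm_starProjection_apply_le u
    _ ≤ ‖T u‖ - ‖T (u - c • v)‖ := by
      have := T.le_of_opNorm_le hT (u - c • v)
      linarith
    _ ≤ ‖T (c • v)‖ := by
      rw [map_sub, sub_le_comm]
      exact norm_sub_norm_le _ _
    _ = |c| * ‖T v‖ := by rw [map_smul, norm_smul, Real.norm_eq_abs]
  exact le_of_mul_le_mul_left hscaled (abs_pos.2 hc0)

section Gaussian

theorem integral_exp_neg_mul_sq_gaussianReal (a : ℝ) :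
    ∫ x, Real.exp (-(a * x ^ 2) / 2) ∂gaussianReal 0 1 = (√(1 + a))⁻¹ := by
  rw [integral_gaussianReal_eq_integral_smul one_ne_zero]
  have hpdf (x : ℝ) : gaussianPDFReal 0 1 x • Real.exp (-(a * x ^ 2) / 2) =
      (√(2 * Real.pi))⁻¹ * Real.exp (-((1 + a) / 2) * x ^ 2) := by
    rw [gaussianPDFReal, smul_eq_mul, mul_assoc, ← Real.exp_add]
    simp only [NNReal.coe_one, mul_one, sub_zero]
    ring_nf
  simp only [hpdf, integral_const_mul, integral_gaussian]
  rw [div_div_eq_mul_div, mul_comm Real.pi 2, Real.sqrt_div (by positivity)]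
  field_simp

variable {E : Type*} [NormedAddCommGroup E] [InnerProductSpace ℝ E] [FiniteDimensional ℝ E]
  [MeasurableSpace E] [BorelSpace E]

theorem integral_exp_neg_sum_mul_inner_sq_stdGaussian {ι : Type*} [Fintype ι]
    (b : OrthonormalBasis ι ℝ E) (a : ι → ℝ) :
    ∫ x, Real.exp (-(∑ i, a i * ⟪b i, x⟫ ^ 2) / 2) ∂stdGaussian E = ∏ i, (√(1 + a i))⁻¹ := by
  have hcoord (x : ι → ℝ) (i : ι) : ⟪b i, ∑ j, x j • b j⟫ = x i :=
    b.orthonormal.inner_right_fintype x i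
  rw [stdGaussian_eq_map_pi_orthonormalBasis b,
    integral_map (Measurable.aemeasurable (by fun_prop)) (by fun_prop)]
  simp only [hcoord, ← Finset.sum_neg_distrib, Finset.sum_div, Real.exp_sum]
  rw [integral_fintype_prod_eq_prod (fun i x => Real.exp (-(a i * x ^ 2) / 2))]
  simp only [integral_exp_neg_mul_sq_gaussianReal]

theorem integral_exp_neg_norm_sq_starProjection_stdGaussian (K : Submodule ℝ E) (a b : ℝ) :
    ∫ x, Real.exp (-(a * ‖K.starProjection x‖ ^ 2 + b * ‖Kᗮ.starProjection x‖ ^ 2) / 2)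
        ∂stdGaussian E =
      (√(1 + a))⁻¹ ^ finrank ℝ K * (√(1 + b))⁻¹ ^ finrank ℝ Kᗮ := by
  have hsum (L : Submodule ℝ E) (x : E) :
      ‖L.starProjection x‖ ^ 2 = ∑ i, ⟪(stdOrthonormalBasis ℝ L i : E), x⟫ ^ 2 := by
    simp only [← L.inner_orthogonalProjectionOnto_eq_of_mem_left]
    exact ((stdOrthonormalBasis ℝ L).sum_sq_inner_right (L.orthogonalProjectionOnto x)).symm
  let B := ((stdOrthonormalBasis ℝ K).prod (stdOrthonormalBasis ℝ Kᗮ)).map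
    K.orthogonalDecomposition.symm
  convert integral_exp_neg_sum_mul_inner_sq_stdGaussian B (Sum.elim (fun _ => a) fun _ => b) using 5
  · rw [hsum K, hsum Kᗮ]
    simp [B, Finset.mul_sum]
  · simp [mul_comm]

theorem stdGaussian_real_le_of_norm_sq_starProjection (K : Submodule ℝ E) {a b : ℝ} (ha : -1 < a)
    (hb : -1 < b) :
    (stdGaussian E).real {x | a * ‖K.starProjection x‖ ^ 2 + b * ‖Kᗮ.starProjection x‖ ^ 2 ≤ 0} ≤
      (√(1 + a))⁻¹ ^ finrank ℝ K * (√(1 + b))⁻¹ ^ finrank ℝ Kᗮ := by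
  rw [← integral_exp_neg_norm_sq_starProjection_stdGaussian K a b]
  set q : E → ℝ := fun x => a * ‖K.starProjection x‖ ^ 2 + b * ‖Kᗮ.starProjection x‖ ^ 2
  have hint : Integrable (fun x => Real.exp (-q x / 2)) (stdGaussian E) := by
    refine .of_integral_ne_zero ?_
    rw [integral_exp_neg_norm_sq_starProjection_stdGaussian K a b]
    have := neg_lt_iff_pos_add'.1 ha
    have := neg_lt_iff_pos_add'.1 hb
    positivity
  have hmarkov := mul_meas_ge_le_integral_of_nonneg
    (.of_forall fun x => (Real.exp_pos (-q x / 2)).le) hint 1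
  rw [one_mul] at hmarkov
  refine (measureReal_mono fun x (hx : q x ≤ 0) => ?_).trans hmarkov
  exact Real.one_le_exp (by linarith)

theorem inv_one_sub_div_add_pow_le_exp_one_pow (k : ℕ) {m : ℕ} (hm : m ≠ 0) :
    (1 - (k : ℝ) / (k + m))⁻¹ ^ m ≤ Real.exp 1 ^ k := calc
  (1 - (k : ℝ) / (k + m))⁻¹ ^ m = (k / m + 1) ^ m := by
    rw [one_sub_div (by positivity), add_sub_cancel_left, inv_div, add_div,
      div_self (by positivity)]
  _ ≤ Real.exp (k / m) ^ m := by gcongr; exact Real.add_one_le_exp _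
  _ = Real.exp 1 ^ k := by
    rw [← Real.exp_nat_mul, mul_div_cancel₀ _ (by positivity), Real.exp_one_pow]

theorem stdGaussian_real_norm_starProjection_lt_le {K : Submodule ℝ E} (hK : K ≠ ⊤) {r : ℝ}
    (hr : 0 < r) :
    (stdGaussian E).real
        {x | ‖K.starProjection x‖ < r * √(finrank ℝ K / (finrank ℝ E * Real.exp 1)) * ‖x‖} ≤
      r ^ finrank ℝ K := by
  set k := finrank ℝ K
  set m := finrank ℝ Kᗮ
  have hd : (finrank ℝ E : ℝ) = k + m := mod_cast K.finrank_add_finrank_orthogonal.symm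
  have hm : m ≠ 0 := by rwa [Ne, Submodule.finrank_eq_zero, Submodule.orthogonal_eq_bot_iff]
  have hp : (k : ℝ) / (k + m) < 1 := (div_lt_one (by positivity)).2
    (lt_add_of_pos_right _ (by positivity))
  -- `a` is the optimal weight in the Chernoff bound, `b` the limit of the optimal one as `r → 0`.
  set a := Real.exp 1 / r ^ 2 - 1
  set b := -((k : ℝ) / (k + m))
  have hsub (x : E) (hx : ‖K.starProjection x‖ < r * √(k / (finrank ℝ E * Real.exp 1)) * ‖x‖) :
      a * ‖K.starProjection x‖ ^ 2 + b * ‖Kᗮ.starProjection x‖ ^ 2 ≤ 0 := by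
    have hx2 : Real.exp 1 / r ^ 2 * ‖K.starProjection x‖ ^ 2 ≤ k / (k + m) * ‖x‖ ^ 2 := calc
      _ ≤ Real.exp 1 / r ^ 2 * (r * √(k / (finrank ℝ E * Real.exp 1)) * ‖x‖) ^ 2 := by gcongr
      _ = k / (k + m) * ‖x‖ ^ 2 := by
        rw [mul_pow, mul_pow, Real.sq_sqrt (by positivity), hd]
        field_simp
    have := mul_nonneg (sub_nonneg.2 hp.le) (sq_nonneg ‖K.starProjection x‖)
    rw [Submodule.norm_sq_eq_add_norm_sq_starProjection x K] at hx2
    linarith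
  have ha_sqrt : (√(1 + a))⁻¹ = r / √(Real.exp 1) := by
    rw [add_sub_cancel, Real.sqrt_div (Real.exp_nonneg 1), Real.sqrt_sq hr.le, inv_div]
  have hb_sqrt : (√(1 + b))⁻¹ ^ m ≤ √(Real.exp 1) ^ k := by
    rw [← pow_le_pow_iff_left₀ (by positivity) (by positivity) two_ne_zero, pow_right_comm,
      inv_pow, Real.sq_sqrt (by linarith), pow_right_comm, Real.sq_sqrt (Real.exp_nonneg 1)]
    exact inv_one_sub_div_add_pow_le_exp_one_pow k hm
  calc _ ≤ (√(1 + a))⁻¹ ^ k * (√(1 + b))⁻¹ ^ m := by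
        have ha : -1 < a := neg_lt_sub_iff_lt_add.2 (lt_add_of_pos_right 1 (by positivity))
        exact (measureReal_mono hsub).trans
          (stdGaussian_real_le_of_norm_sq_starProjection K ha (neg_lt_neg hp))
    _ ≤ (r / √(Real.exp 1)) ^ k * √(Real.exp 1) ^ k := by rw [ha_sqrt]; gcongr
    _ = r ^ k := by rw [← mul_pow, div_mul_cancel₀ _ (by positivity)]

end Gaussian

section RandomRotation

theorem measure_inv_smul_mem_eq {G X : Type*} [Group G] [MulAction G X] [MeasurableSpace G]
    [MeasurableSpace X] [MeasurableInv G] [MeasurableSMul₂ G X] (μ : Measure G)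
    [IsProbabilityMeasure μ] (ν : Measure X) [IsProbabilityMeasure ν]
    [SMulInvariantMeasure G X ν] {S : Set X} (hS : MeasurableSet S) {x : X}
    (hx : ∀ᵐ y ∂ν, μ {g | g⁻¹ • y ∈ S} = μ {g | g⁻¹ • x ∈ S}) :
    μ {g | g⁻¹ • x ∈ S} = ν S := by
  have hmeas : MeasurableSet {p : G × X | p.1⁻¹ • p.2 ∈ S} :=
    (measurable_fst.inv.smul measurable_snd) hS
  calc μ {g | g⁻¹ • x ∈ S} = ∫⁻ y, μ {g | g⁻¹ • y ∈ S} ∂ν := by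
        rw [lintegral_congr_ae hx, lintegral_const, measure_univ, mul_one]
    _ = μ.prod ν {p | p.1⁻¹ • p.2 ∈ S} := (Measure.prod_apply_symm hmeas).symm
    _ = ∫⁻ g, ν ((g⁻¹ • ·) ⁻¹' S) ∂μ := Measure.prod_apply hmeas
    _ = ν S := by simp [measure_preimage_smul]

variable {E : Type*} [NormedAddCommGroup E] [InnerProductSpace ℝ E] [CompleteSpace E]

instance : ContinuousSMul (unitary (E →L[ℝ] E)) E :=
  ⟨isBoundedBilinearMap_apply.continuous.comp
    ((continuous_subtype_val.comp continuous_fst).prodMk continuous_snd)⟩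

theorem exists_unitary_smul_eq {v w : E} (h : ‖v‖ = ‖w‖) :
    ∃ Q : unitary (E →L[ℝ] E), Q • v = w :=
  ⟨Unitary.linearIsometryEquiv.symm (ℝ ∙ (v - w))ᗮ.reflection, Submodule.reflection_sub h⟩

variable [FiniteDimensional ℝ E]

instance : CompactSpace (unitary (E →L[ℝ] E)) :=
  isCompact_iff_compactSpace.1 <| isCompact_of_isClosed_isBounded isClosed_unitary <|
    isBounded_iff_forall_norm_le.2 ⟨1, fun T hT => T.opNorm_le_bound zero_le_one fun x => by
      rw [ContinuousLinearMap.norm_map_of_mem_unitary hT, one_mul]⟩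

variable [MeasurableSpace E] [BorelSpace E]

instance : SMulInvariantMeasure (unitary (E →L[ℝ] E)) E (stdGaussian E) where
  measure_preimage_smul Q S hS := by
    conv_rhs => rw [← stdGaussian_map (Unitary.linearIsometryEquiv Q),
      Measure.map_apply (by fun_prop) hS]
    rfl

instance [Nontrivial E] : NullSingletonClass (stdGaussian E) := by
  refine IsGaussian.nullSingletonClass fun x hx => ?_
  obtain ⟨v, hv⟩ := exists_ne (0 : E)
  have := variance_dual_stdGaussian (innerSL ℝ v)
  rw [hx, variance_dirac, innerSL_apply_norm] at this
  exact hv (by simpa using this.symm)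

theorem measure_inv_smul_mem_cone (μ : Measure (unitary (E →L[ℝ] E))) [IsProbabilityMeasure μ]
    [μ.IsMulLeftInvariant] {S : Set E} (hS : MeasurableSet S)
    (hcone : ∀ c : ℝ, 0 < c → ∀ v, c • v ∈ S ↔ v ∈ S) {u : E} (hu : u ≠ 0) :
    μ {Q | Q⁻¹ • u ∈ S} = stdGaussian E S := by
  have : Nontrivial E := ⟨u, 0, hu⟩
  refine measure_inv_smul_mem_eq μ (stdGaussian E) hS ?_
  filter_upwards [Measure.ae_ne (stdGaussian E) 0] with v hv
  have hc : 0 < ‖v‖ / ‖u‖ := by positivity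
  obtain ⟨R, hR⟩ : ∃ R : unitary (E →L[ℝ] E), R • (‖v‖ / ‖u‖) • u = v :=
    exists_unitary_smul_eq (by
      rw [norm_smul, Real.norm_of_nonneg hc.le, div_mul_cancel₀ _ (norm_ne_zero_iff.2 hu)])
  rw [← measure_preimage_mul μ R]
  congr 1
  ext Q
  change (R * Q)⁻¹ • v ∈ S ↔ Q⁻¹ • u ∈ S
  rw [mul_inv_rev, mul_smul, inv_smul_eq_iff.2 hR.symm, smul_comm, hcone _ hc]

theorem exists_linearIsometryEquiv_forall_notMem {S : Set E} (hS : MeasurableSet S)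
    (hcone : ∀ c : ℝ, 0 < c → ∀ v, c • v ∈ S ↔ v ∈ S) (hS0 : (0 : E) ∉ S) (s : Finset E)
    (hs : s.card * (stdGaussian E).real S < 1) :
    ∃ φ : E ≃ₗᵢ[ℝ] E, ∀ u ∈ s, φ u ∉ S := by
  let μ : Measure (unitary (E →L[ℝ] E)) := Measure.haarMeasure ⊤
  have : IsProbabilityMeasure μ := ⟨Measure.haarMeasure_self⟩
  have hμ (u : E) : μ.real {Q | Q⁻¹ • u ∈ S} ≤ (stdGaussian E).real S := by
    rcases eq_or_ne u 0 with rfl | hu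
    · simp [hS0]
    · rw [measureReal_def, measure_inv_smul_mem_cone μ hS hcone hu, measureReal_def]
  have hbad : μ.real (⋃ u ∈ s, {Q | Q⁻¹ • u ∈ S}) < 1 := calc
    _ ≤ ∑ u ∈ s, μ.real {Q | Q⁻¹ • u ∈ S} := measureReal_biUnion_finset_le _ _
    _ ≤ s.card * (stdGaussian E).real S := by simpa using Finset.sum_le_sum fun u _ => hμ u
    _ < 1 := hs
  obtain ⟨Q, hQ⟩ : ∃ Q, Q ∉ ⋃ u ∈ s, {Q : unitary (E →L[ℝ] E) | Q⁻¹ • u ∈ S} := by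
    by_contra! h
    rw [Set.eq_univ_of_forall h, probReal_univ] at hbad
    exact hbad.false
  exact ⟨Unitary.linearIsometryEquiv Q⁻¹, fun u hu h => hQ (Set.mem_biUnion hu h)⟩

end RandomRotation

variable {E : Type*} [NormedAddCommGroup E] [InnerProductSpace ℝ E] [FiniteDimensional ℝ E]
  {ι : Type*}

theorem exists_submodule_finrank_eq {k : ℕ} (hk : k ≤ finrank ℝ E) :
    ∃ K : Submodule ℝ E, finrank ℝ K = k := by
  have hb := (stdOrthonormalBasis ℝ E).orthonormal.linearIndependent.comp _
    (Fin.castLE_injective hk)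
  exact ⟨_, (finrank_span_eq_card hb).trans (Fintype.card_fin k)⟩

theorem exists_submodule_forall_mul_norm_le_norm_starProjection (s : Finset E) {k : ℕ}
    (hk : k < finrank ℝ E) {r : ℝ} (hr : 0 < r) (hs : s.card * r ^ k < 1) :
    ∃ K : Submodule ℝ E, finrank ℝ K = k ∧
      ∀ u ∈ s, r * √(k / (finrank ℝ E * Real.exp 1)) * ‖u‖ ≤ ‖K.starProjection u‖ := by
  borelize E
  have : CompleteSpace E := FiniteDimensional.complete ℝ E
  obtain ⟨K, rfl⟩ := exists_submodule_finrank_eq hk.le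
  have hK : K ≠ ⊤ := fun h => hk.ne (by rw [h, finrank_top])
  set c := r * √(finrank ℝ K / (finrank ℝ E * Real.exp 1))
  let S : Set E := {x | ‖K.starProjection x‖ < c * ‖x‖}
  have hS : MeasurableSet S := measurableSet_lt (by fun_prop) (by fun_prop)
  have hcone (t : ℝ) (ht : 0 < t) (x : E) : t • x ∈ S ↔ x ∈ S := by
    change ‖K.starProjection (t • x)‖ < c * ‖t • x‖ ↔ ‖K.starProjection x‖ < c * ‖x‖
    rw [map_smul, norm_smul, norm_smul, Real.norm_of_nonneg ht.le, mul_left_comm,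
      mul_lt_mul_iff_right₀ ht]
  have hcard : s.card * (stdGaussian E).real S < 1 := lt_of_le_of_lt
    (by gcongr; exact stdGaussian_real_norm_starProjection_lt_le hK hr) hs
  obtain ⟨φ, hφ⟩ := exists_linearIsometryEquiv_forall_notMem hS hcone (by simp [S]) s hcard
  refine ⟨K.map (φ.symm.toLinearEquiv : E →ₗ[ℝ] E), LinearEquiv.finrank_map_eq _ _, fun u hu => ?_⟩
  calc c * ‖u‖ = c * ‖φ u‖ := by rw [φ.norm_map]
    _ ≤ ‖K.starProjection (φ u)‖ := not_lt.1 (hφ u hu)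
    _ = ‖(K.map (φ.symm.toLinearEquiv : E →ₗ[ℝ] E)).starProjection u‖ := by
      rw [Submodule.starProjection_map_apply, φ.symm.norm_map, φ.symm_symm]

theorem rpow_neg_two_div_natCast_pow {x : ℝ} (hx : 0 ≤ x) {k : ℕ} (hk : k ≠ 0) :
    (x ^ (-(2 : ℝ) / k)) ^ k = (x ^ 2)⁻¹ := by
  rw [← Real.rpow_natCast, ← Real.rpow_mul hx, div_mul_cancel₀ _ (by positivity),
    Real.rpow_neg hx, Real.rpow_two]

theorem exists_submodule_forall_mul_norm_sub_le_norm_starProjection [Fintype ι] [Nonempty ι]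
    (x : ι → E) {k : ℕ} (hk : k ≠ 0) (hkd : k < finrank ℝ E) :
    ∃ K : Submodule ℝ E, finrank ℝ K = k ∧ ∀ i j,
      (Fintype.card ι : ℝ) ^ (-(2 : ℝ) / k) * √(k / (finrank ℝ E * Real.exp 1)) * ‖x i - x j‖ ≤
        ‖K.starProjection (x i - x j)‖ := by
  classical
  let s : Finset E := Finset.univ.offDiag.image fun p : ι × ι => x p.1 - x p.2
  have hs : s.card < Fintype.card ι ^ 2 := calc
    s.card ≤ Fintype.card ι * Fintype.card ι - Fintype.card ι :=
      Finset.card_image_le.trans (Finset.offDiag_card _).le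
    _ < Fintype.card ι ^ 2 := by
      rw [sq]
      exact Nat.sub_lt (by positivity) Fintype.card_pos
  have hcard : s.card * ((Fintype.card ι : ℝ) ^ (-(2 : ℝ) / k)) ^ k < 1 := by
    rw [rpow_neg_two_div_natCast_pow (by positivity) hk, mul_inv_lt_iff₀ (by positivity), one_mul]
    exact_mod_cast hs
  obtain ⟨K, hK, h⟩ :=
    exists_submodule_forall_mul_norm_le_norm_starProjection s hkd (by positivity) hcard
  refine ⟨K, hK, fun i j => ?_⟩
  rcases eq_or_ne i j with rfl | hij
  · simp
  · exact h _ (Finset.mem_image_of_mem (fun p : ι × ι => x p.1 - x p.2) (by simpa : (i, j) ∈ _))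

/-- `(σ, ε, k)`-orthogonal preservability of the dataset of points `x` with labels `y`. The
orthogonal projection of rank `k` is encoded by its range `K`. -/
def OrthogonallyPreservable {L : Type*} (σ ε : ℝ) (k : ℕ) (x : ι → E) (y : ι → L) : Prop :=
  ∃ K : Submodule ℝ E, finrank ℝ K = k ∧ ∀ ⦃i j⦄, y i ≠ y j →
    ∀ a ∈ closedBall (x i) σ, ∀ a' ∈ closedBall (x j) σ,
      ε * ‖a - a'‖ ≤ ‖K.starProjection (a - a')‖

theorem orthogonally_preservable_of_small_ratio_general [Fintype ι] [Nonempty ι] {L : Type*}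
    {x : ι → E} {y : ι → L} {k : ℕ} {σ δ : ℝ} (hk : k ≠ 0) (hkd : k < finrank ℝ E) (hδ : 0 < δ)
    (hsep : ∀ i j, y i ≠ y j → δ ≤ ‖x i - x j‖)
    (hratio : 2 * σ / δ ≤ (1 / 2) * √(k / (finrank ℝ E * Real.exp 1)) *
      (Fintype.card ι : ℝ) ^ (-(2 : ℝ) / k)) :
    OrthogonallyPreservable σ ((1 / 2) * √(k / (finrank ℝ E * Real.exp 1)) *
      (Fintype.card ι : ℝ) ^ (-(2 : ℝ) / k)) k x y := by
  obtain ⟨K, hK, hdiff⟩ := exists_submodule_forall_mul_norm_sub_le_norm_starProjection x hk hkd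
  refine ⟨K, hK, fun i j hij a ha a' ha' => ?_⟩
  set c := √(k / (finrank ℝ E * Real.exp 1))
  set r := (Fintype.card ι : ℝ) ^ (-(2 : ℝ) / k)
  have hc : c ≤ 1 := Real.sqrt_le_one.2 <| div_le_one_of_le₀ (by
    rw [← mul_one (k : ℝ)]
    gcongr
    exact Real.one_le_exp zero_le_one) (by positivity)
  have hr : r ≤ 1 := Real.rpow_le_one_of_one_le_of_nonpos (mod_cast Fintype.card_pos)
    (div_nonpos_of_nonpos_of_nonneg (by norm_num) k.cast_nonneg)
  have hrc : r * c ≤ 1 := mul_le_one₀ hr (Real.sqrt_nonneg _) hc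
  have hpert : ‖x i - x j - (a - a')‖ ≤ (1 / 2) * c * r * ‖x i - x j‖ := calc
    ‖x i - x j - (a - a')‖ = ‖(a' - x j) - (a - x i)‖ := by congr 1; abel
    _ ≤ σ + σ := norm_sub_le_of_le (mem_closedBall_iff_norm.1 ha') (mem_closedBall_iff_norm.1 ha)
    _ ≤ (1 / 2) * c * r * δ := by linarith [(div_le_iff₀ hδ).1 hratio]
    _ ≤ (1 / 2) * c * r * ‖x i - x j‖ := by gcongr; exact hsep i j hij
  have := sub_mul_norm_le_norm_map K.starProjection_norm_le (by linarith) (hdiff i j) hpert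
  linarith

end

theorem lpNorm_two {d : ℕ} (x : Fin d → ℝ) : lpNorm 2 x = ‖WithLp.toLp 2 x‖ := by
  rw [lpNorm, if_neg (by simp), EuclideanSpace.norm_eq, Real.sqrt_eq_rpow]
  simp

theorem exists_matrix_toEuclideanCLM_eq_starProjection {n : Type*} [Fintype n] [DecidableEq n]
    (K : Submodule ℝ (EuclideanSpace ℝ n)) :
    ∃ P : Matrix n n ℝ, P * P = P ∧ P.transpose = P ∧ P.rank = Module.finrank ℝ K ∧
      Matrix.toEuclideanCLM (𝕜 := ℝ) P = K.starProjection := by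
  obtain ⟨P, hP⟩ : ∃ P : Matrix n n ℝ, Matrix.toEuclideanCLM (𝕜 := ℝ) P = K.starProjection :=
    ⟨_, StarAlgEquiv.apply_symm_apply _ _⟩
  have hlin : Matrix.toEuclideanLin P = (K.starProjection : _ →ₗ[ℝ] _) := by
    rw [← Matrix.coe_toEuclideanCLM_eq_toEuclideanLin, hP]
  refine ⟨P, ?_, ?_, ?_, hP⟩
  · refine (Matrix.toEuclideanCLM (n := n) (𝕜 := ℝ)).injective ?_
    change Matrix.toEuclideanCLM (𝕜 := ℝ) (P * P) = Matrix.toEuclideanCLM (𝕜 := ℝ) P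
    rw [map_mul, hP]
    exact K.isIdempotentElem_starProjection
  · rw [← Matrix.conjTranspose_eq_transpose_of_trivial]
    exact Matrix.isSymmetric_toEuclideanLin_iff.1 (hlin ▸ K.starProjection_isSymmetric)
  · rw [P.rank_eq_finrank_range_toLin (PiLp.basisFun 2 ℝ n) (PiLp.basisFun 2 ℝ n),
      ← Matrix.toLpLin_eq_toLin, hlin, K.range_starProjection]

theorem OrthogonallyPreservable.exists_matrix {ι L : Type*} {d k : ℕ} {σ ε : ℝ}
    {X : ι → Fin d → ℝ} {Y : ι → L}
    (h : OrthogonallyPreservable σ ε k (fun i => WithLp.toLp 2 (X i)) Y) :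
    ∃ P : Matrix (Fin d) (Fin d) ℝ, P * P = P ∧ P.transpose = P ∧ P.rank = k ∧
      ∀ i j, Y i ≠ Y j → ∀ a a' : Fin d → ℝ, lpNorm 2 (a - X i) ≤ σ → lpNorm 2 (a' - X j) ≤ σ →
        ε * lpNorm 2 (a - a') ≤ lpNorm 2 (P.mulVec (a - a')) := by
  obtain ⟨K, rfl, hpres⟩ := h
  obtain ⟨P, hidem, hsymm, hrank, hP⟩ := exists_matrix_toEuclideanCLM_eq_starProjection K
  refine ⟨P, hidem, hsymm, hrank, fun i j hij a a' ha ha' => ?_⟩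
  rw [lpNorm_two] at ha ha'
  rw [lpNorm_two, lpNorm_two, ← Matrix.toEuclideanCLM_toLp, hP]
  exact hpres hij _ (mem_closedBall_iff_norm.2 ha) _ (mem_closedBall_iff_norm.2 ha')

/-- **Existence of an orthogonally preserving projection**. -/
theorem orthogonally_preservable_of_small_ratio
    (N d C k : ℕ) (σ δ : ℝ)
    (hN : 2 ≤ N) (hd : 2 ≤ d) (hC : 2 ≤ C) (hk1 : 1 ≤ k) (hkd : k ≤ d - 1)
    (hσ : 0 < σ) (hδ : 0 < δ) (hσδ : σ < δ / 2)
    (hratio : 2 * σ / δ ≤ (1 / 2) * Real.sqrt ((k : ℝ) / ((d : ℝ) * Real.exp 1)) *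
      (N : ℝ) ^ (-(2 : ℝ) / (k : ℝ))) :
    ∀ (X : Fin N → Fin d → ℝ) (Y : Fin N → ℕ),
      (∀ i, 1 ≤ Y i ∧ Y i ≤ C) → Separated 2 δ X Y →
      ∃ P : Matrix (Fin d) (Fin d) ℝ, P * P = P ∧ P.transpose = P ∧ P.rank = k ∧
        ∀ i j, Y i ≠ Y j → ∀ a a' : Fin d → ℝ,
          lpNorm 2 (a - X i) ≤ σ → lpNorm 2 (a' - X j) ≤ σ →
          ((1 / 2) * Real.sqrt ((k : ℝ) / ((d : ℝ) * Real.exp 1)) *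
              (N : ℝ) ^ (-(2 : ℝ) / (k : ℝ))) * lpNorm 2 (a - a') ≤
            lpNorm 2 (P.mulVec (a - a')) := by
  intro X Y _ hsep
  have : NeZero N := ⟨by omega⟩
  simpa using OrthogonallyPreservable.exists_matrix (orthogonally_preservable_of_small_ratio_general
    (x := fun i => WithLp.toLp 2 (X i)) (by omega) (by simpa using by omega) hδ
    (by simpa [lpNorm_two] using hsep.1) (by simpa using hratio))

end
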